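/- The sequence (N'_k)_{k≥1} is nondecreasing: N'_k ≤ N'_{k+1} for all k ≥ 1. -/

import Mathlib

/-!
Put `t = tr A` and let `S n` be the rescaled Chebyshev polynomials of the second kind, so that
`S (-1) = 0`, `S 0 = 1`. Since `A + A⁻¹ = t`, one has
`A ^ (2m) - 1 = A ^ m (A ^ m - A⁻ᵐ) = S (m-1) (t) • A ^ m (A - A⁻¹)` and
`A ^ (2m+1) - 1 = A ^ m (A ^ (m+1) - A⁻ᵐ) = (S m + S (m-1)) (t) • A ^ m (A - 1)`.
The factor `A ^ m` is invertible, `A - A⁻¹ = 2 (A - t/2)`, and `A - t/2` and `A - 1` have coprime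
off-diagonal entries, so `N' (2m) = 2 |S (m-1) (t)|` and `N' (2m+1) = |S m (t) + S (m-1) (t)|`.
As `|t| ≥ 4`, each `|S m (t)|` is at least three times its predecessor, so these numbers interlace.
-/

open Polynomial.Chebyshev

section PowerFormulas

variable {R α : Type*} [CommRing R] [Ring α] [Algebra R α] {t : R} {x y : α}

lemma eval_S_add_one (t : R) (n : ℤ) :
    (S R (n + 1)).eval t = t * (S R n).eval t - (S R (n - 1)).eval t := by
  simp [S_add_one]

lemma pow_eq_eval_S_smul_one_sub (hmul : x * y = 1) (hadd : x + y = t • 1) (n : ℕ) :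
    x ^ n = (S R n).eval t • 1 - (S R (n - 1)).eval t • y := by
  induction n with
  | zero => simp
  | succ n ih =>
    have hx : x = t • 1 - y := eq_sub_of_add_eq hadd
    calc x ^ (n + 1) = (S R n).eval t • x - (S R (n - 1)).eval t • 1 := by
          rw [pow_succ', ih, mul_sub, mul_smul_comm, mul_smul_comm, mul_one, hmul]
      _ = (S R (n + 1 : ℕ)).eval t • 1 - (S R ((n + 1 : ℕ) - 1)).eval t • y := by
          push_cast
          rw [eval_S_add_one, hx, add_sub_cancel_right]
          module

lemma mul_eq_one_symm_of_add_eq_smul_one (hmul : x * y = 1) (hadd : x + y = t • 1) :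
    y * x = 1 := by
  have hy : y = t • 1 - x := eq_sub_of_add_eq' hadd
  rw [← hmul, hy, mul_sub, sub_mul, smul_one_mul, mul_smul_one]

lemma right_inv_pow_eq_eval_S_smul_one_sub (hmul : x * y = 1) (hadd : x + y = t • 1) (n : ℕ) :
    y ^ n = (S R n).eval t • 1 - (S R (n - 1)).eval t • x :=
  pow_eq_eval_S_smul_one_sub (mul_eq_one_symm_of_add_eq_smul_one hmul hadd)
    (by rw [add_comm, hadd]) n

lemma pow_two_mul_sub_one_eq (hmul : x * y = 1) (hadd : x + y = t • 1) (m : ℕ) :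
    x ^ (2 * m) - 1 = (S R (m - 1)).eval t • (x ^ m * (x - y)) := by
  have hdiff : x ^ m - y ^ m = (S R (m - 1)).eval t • (x - y) := by
    rw [pow_eq_eval_S_smul_one_sub hmul hadd, right_inv_pow_eq_eval_S_smul_one_sub hmul hadd]
    module
  rw [← mul_smul_comm, ← hdiff, mul_sub, pow_mul_pow_eq_one m hmul, two_mul, pow_add]

lemma pow_two_mul_add_one_sub_one_eq (hmul : x * y = 1) (hadd : x + y = t • 1) (m : ℕ) :
    x ^ (2 * m + 1) - 1 =
      ((S R m).eval t + (S R (m - 1)).eval t) • (x ^ m * (x - 1)) := by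
  have hdiff : x ^ (m + 1) - y ^ m =
      ((S R m).eval t + (S R (m - 1)).eval t) • (x - 1) := by
    have hy : y = t • 1 - x := eq_sub_of_add_eq' hadd
    rw [pow_eq_eval_S_smul_one_sub hmul hadd, right_inv_pow_eq_eval_S_smul_one_sub hmul hadd]
    push_cast
    rw [eval_S_add_one, hy, add_sub_cancel_right]
    module
  rw [← mul_smul_comm, ← hdiff, mul_sub, pow_mul_pow_eq_one m hmul, ← pow_add]
  congr 2
  ring

end PowerFormulas

lemma abs_sub_one_mul_abs_eval_S_le {R : Type*} [CommRing R] [LinearOrder R]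
    [IsStrictOrderedRing R] {t : R} (ht : 2 ≤ |t|) (n : ℕ) :
    (|t| - 1) * |(S R (n - 1)).eval t| ≤ |(S R n).eval t| := by
  induction n with
  | zero => simp
  | succ n ih =>
    have hle : |(S R (n - 1)).eval t| ≤ |(S R n).eval t| :=
      (le_mul_of_one_le_left (abs_nonneg _) (by linarith)).trans ih
    push_cast
    rw [add_sub_cancel_right, eval_S_add_one]
    calc (|t| - 1) * |(S R n).eval t|
        ≤ |t * (S R n).eval t| - |(S R (n - 1)).eval t| := by rw [abs_mul]; linarith
      _ ≤ |t * (S R n).eval t - (S R (n - 1)).eval t| := abs_sub_abs_le_abs_sub _ _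

section EntryDivisibility

variable {R m n : Type*} [CommRing R] {r e : R} {X : Matrix m n R}

lemma forall_dvd_smul_apply_iff {i i' : m} {j j' : n} (hX : IsCoprime (X i j) (X i' j')) :
    (∀ k l, r ∣ (e • X) k l) ↔ r ∣ e := by
  refine ⟨fun h ↦ ?_, fun h k l ↦ h.mul_right _⟩
  obtain ⟨u, v, huv⟩ := hX
  have he : e = u * (e • X) i j + v * (e • X) i' j' := by
    simp only [Matrix.smul_apply, smul_eq_mul]
    linear_combination -e * huv
  rw [he]
  exact dvd_add ((h i j).mul_left u) ((h i' j').mul_left v)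

variable [Fintype m]

lemma forall_dvd_mul_apply (P : Matrix m m R) (hX : ∀ i j, r ∣ X i j) (i : m) (j : n) :
    r ∣ (P * X) i j := by
  rw [Matrix.mul_apply]
  exact Finset.dvd_sum fun k _ ↦ (hX k j).mul_left _

lemma forall_dvd_mul_apply_iff [DecidableEq m] {P : Matrix m m R} (hP : IsUnit P) :
    (∀ i j, r ∣ (P * X) i j) ↔ ∀ i j, r ∣ X i j := by
  refine ⟨fun h ↦ ?_, forall_dvd_mul_apply P⟩
  obtain ⟨Q, hQ⟩ := hP.exists_left_inv
  simpa only [← Matrix.mul_assoc, hQ, Matrix.one_mul] using forall_dvd_mul_apply Q h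

end EntryDivisibility

lemma eq_abs_of_isGreatest_dvd {e : ℤ} {n : ℕ}
    (hn : IsGreatest {N : ℕ | 0 < N ∧ (N : ℤ) ∣ e} n) : (n : ℤ) = |e| := by
  obtain ⟨⟨-, hdvd⟩, hub⟩ := hn
  have he : e ≠ 0 := by
    rintro rfl
    exact absurd (hub ⟨n.succ_pos, dvd_zero _⟩) n.lt_succ_self.not_ge
  apply le_antisymm
  · exact Int.le_of_dvd (abs_pos.mpr he) ((dvd_abs _ _).mpr hdvd)
  · rw [Int.abs_eq_natAbs, Nat.cast_le]
    exact hub ⟨Int.natAbs_pos.mpr he, Int.natAbs_dvd.mpr dvd_rfl⟩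

section FinTwo

variable {R : Type*} [CommRing R] {A : Matrix (Fin 2) (Fin 2) R}

lemma add_adjugate_fin_two (A : Matrix (Fin 2) (Fin 2) R) :
    A + A.adjugate = A.trace • 1 := by
  ext i j
  fin_cases i <;> fin_cases j <;>
    simp [Matrix.adjugate_fin_two, Matrix.trace_fin_two, add_comm]

lemma mul_adjugate_eq_one (hdet : A.det = 1) : A * A.adjugate = 1 := by
  rw [Matrix.mul_adjugate, hdet, one_smul]

lemma isUnit_pow_of_det_eq_one (hdet : A.det = 1) (m : ℕ) : IsUnit (A ^ m) :=
  (A.isUnit_iff_isUnit_det.mpr (hdet ▸ isUnit_one)).pow m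

lemma forall_dvd_pow_two_mul_sub_one_apply_iff (hdet : A.det = 1) (heven : Even A.trace)
    (hoff : IsCoprime (A 0 1) (A 1 0)) (r : R) (m : ℕ) :
    (∀ i j, r ∣ (A ^ (2 * m) - 1) i j) ↔ r ∣ 2 * (S R (m - 1)).eval A.trace := by
  obtain ⟨s, hs⟩ := heven
  have hsub : A - A.adjugate = (2 : R) • (A - s • 1) := by
    rw [eq_sub_of_add_eq' (add_adjugate_fin_two A), hs]
    module
  have hprim : IsCoprime ((A - s • 1) 0 1) ((A - s • 1) 1 0) := by simpa using hoff
  rw [pow_two_mul_sub_one_eq (mul_adjugate_eq_one hdet) (add_adjugate_fin_two A), hsub,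
    mul_smul_comm, smul_smul, ← mul_smul_comm,
    forall_dvd_mul_apply_iff (isUnit_pow_of_det_eq_one hdet m),
    forall_dvd_smul_apply_iff hprim, mul_comm]

lemma forall_dvd_pow_two_mul_add_one_sub_one_apply_iff (hdet : A.det = 1)
    (hoff : IsCoprime (A 0 1) (A 1 0)) (r : R) (m : ℕ) :
    (∀ i j, r ∣ (A ^ (2 * m + 1) - 1) i j) ↔
      r ∣ (S R m).eval A.trace + (S R (m - 1)).eval A.trace := by
  have hprim : IsCoprime ((A - 1) 0 1) ((A - 1) 1 0) := by simpa using hoff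
  rw [pow_two_mul_add_one_sub_one_eq (mul_adjugate_eq_one hdet) (add_adjugate_fin_two A),
    ← mul_smul_comm, forall_dvd_mul_apply_iff (isUnit_pow_of_det_eq_one hdet m),
    forall_dvd_smul_apply_iff hprim]

end FinTwo

section LargestModulus

variable {A : Matrix (Fin 2) (Fin 2) ℤ} {n m : ℕ}

lemma eq_abs_of_isGreatest_dvd_pow_two_mul_sub_one (hdet : A.det = 1) (heven : Even A.trace)
    (hoff : IsCoprime (A 0 1) (A 1 0))
    (hn : IsGreatest {N : ℕ | 0 < N ∧ ∀ i j, (N : ℤ) ∣ (A ^ (2 * m) - 1) i j} n) :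
    (n : ℤ) = |2 * (S ℤ (m - 1)).eval A.trace| :=
  eq_abs_of_isGreatest_dvd <| by
    simpa only [forall_dvd_pow_two_mul_sub_one_apply_iff hdet heven hoff] using hn

lemma eq_abs_of_isGreatest_dvd_pow_two_mul_add_one_sub_one (hdet : A.det = 1)
    (hoff : IsCoprime (A 0 1) (A 1 0))
    (hn : IsGreatest {N : ℕ | 0 < N ∧ ∀ i j, (N : ℤ) ∣ (A ^ (2 * m + 1) - 1) i j} n) :
    (n : ℤ) = |(S ℤ m).eval A.trace + (S ℤ (m - 1)).eval A.trace| :=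
  eq_abs_of_isGreatest_dvd <| by
    simpa only [forall_dvd_pow_two_mul_add_one_sub_one_apply_iff hdet hoff] using hn

end LargestModulus

lemma three_mul_abs_eval_S_le_of_even {t : ℤ} (heven : Even t) (ht : 2 < |t|) (n : ℕ) :
    3 * |(S ℤ (n - 1)).eval t| ≤ |(S ℤ n).eval t| := by
  have ht_four : 4 ≤ |t| := by
    obtain ⟨s, hs⟩ := even_abs.mpr heven
    lia
  calc 3 * |(S ℤ (n - 1)).eval t|
      ≤ (|t| - 1) * |(S ℤ (n - 1)).eval t| := by gcongr; linarith
    _ ≤ |(S ℤ n).eval t| := abs_sub_one_mul_abs_eval_S_le ht.le n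

theorem stmt7_general {A : Matrix (Fin 2) (Fin 2) ℤ} (hdet : A.det = 1)
    (heven : Even A.trace) (htr : 2 < |A.trace|) (hoff : IsCoprime (A 0 1) (A 1 0))
    {N' : ℕ → ℕ}
    (hN' : ∀ k : ℕ, 1 ≤ k →
      IsGreatest {N : ℕ | 0 < N ∧ ∀ i j : Fin 2, (N : ℤ) ∣ (A ^ k - 1) i j} (N' k))
    {k : ℕ} (hk : 1 ≤ k) : N' k ≤ N' (k + 1) := by
  obtain ⟨m, hm⟩ := Nat.even_or_odd' k
  set u := (S ℤ m).eval A.trace with hu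
  set v := (S ℤ (m - 1)).eval A.trace
  have hgrowth : 3 * |v| ≤ |u| := three_mul_abs_eval_S_le_of_even heven htr m
  have hN'_odd : (N' (2 * m + 1) : ℤ) = |u + v| :=
    eq_abs_of_isGreatest_dvd_pow_two_mul_add_one_sub_one hdet hoff (hN' _ (by lia))
  zify
  rcases hm with rfl | rfl
  · have hN'_even : (N' (2 * m) : ℤ) = |2 * v| :=
      eq_abs_of_isGreatest_dvd_pow_two_mul_sub_one hdet heven hoff (hN' _ hk)
    rw [hN'_even, hN'_odd, abs_mul, abs_two]
    linarith [abs_sub_abs_le_abs_add u v]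
  · have hN'_even : (N' (2 * (m + 1)) : ℤ) = |2 * u| := by
      simpa [hu] using
        eq_abs_of_isGreatest_dvd_pow_two_mul_sub_one hdet heven hoff (hN' (2 * (m + 1)) (by lia))
    rw [show 2 * m + 1 + 1 = 2 * (m + 1) by ring, hN'_even, hN'_odd, abs_mul, abs_two]
    linarith [abs_add_le u v, abs_nonneg v]

/-- With `A = !![a, b; c, d]` of determinant 1, trace `a + d` even and `> 2`,
`gcd(b, c) = 1`, and `N' k` the largest positive integer `N` such that `A^k ≡ I (mod N)`
entrywise, the sequence `N'` is nondecreasing: `N' k ≤ N' (k+1)` for all `k ≥ 1`. -/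
theorem stmt7 (a b c d : ℤ) (hdet : a * d - b * c = 1)
    (heven : Even (a + d)) (htr : 2 < a + d) (hbc : Int.gcd b c = 1)
    (N' : ℕ → ℕ)
    (hN' : ∀ k : ℕ, 1 ≤ k →
      IsGreatest {N : ℕ | 0 < N ∧ ∀ i j : Fin 2,
        (N : ℤ) ∣ (((!![a, b; c, d] : Matrix (Fin 2) (Fin 2) ℤ) ^ k - 1) i j)} (N' k)) :
    ∀ k : ℕ, 1 ≤ k → N' k ≤ N' (k + 1) := fun _ ↦
  stmt7_general (by simpa using hdet) (by simpa using heven)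
    (by simpa using htr.trans_le (le_abs_self _)) (Int.isCoprime_iff_gcd_eq_one.mpr hbc) hN'
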